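/- arXiv:2602.16384 — 2 statements merged into one kernel-verified Lean document; each statement's English description precedes it below -/
import Mathlib

section
/- Let k be a field and n a positive integer. The Chevalley map p: gl_n → A^n sending a matrix to the coefficients of its characteristic polynomial is flat. -/
/-!
Adjoin the off-diagonal entries of the generic matrix `A` to the coefficients of its characteristic
polynomial. This gives `n ^ 2` forms `z s` of positive degrees `d s` in the `n ^ 2` entries, and it
suffices that the polynomial ring `S` in the entries is free over the polynomial ring in the `z s`,
which in turn is a polynomial ring over `k[𝔸ⁿ]`.

Modulo the `z s` the matrix `A` becomes diagonal, with entries `t j` satisfying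
`∏ j, (X - t j) = X ^ n`. Splitting off one root at a time shows that the quotient is spanned by
the monomials `∏ j, t j ^ b j` with `b j < n - j`, so by the graded Nakayama lemma `S` is generated
over the `z s` by the monomials with exponents `b s < d s`. These generators are independent: if
the `z s` are replaced by `X s ^ d s`, the same combinations form a basis of `S` by division with
remainder of exponents, so comparing the two gives a surjective graded endomorphism of `S`, and a
surjective endomorphism of a finitely generated graded piece is injective.
-/

section Graded
open DirectSum

theorem coe_decompose_map {ι R M N : Type*} [DecidableEq ι] [Semiring R] [AddCommMonoid M]
    [Module R M] [AddCommMonoid N] [Module R N] (ℳ : ι → Submodule R M) [Decomposition ℳ]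
    (𝒩 : ι → Submodule R N) [Decomposition 𝒩] {φ : M →ₗ[R] N}
    (hφ : ∀ i, ∀ x ∈ ℳ i, φ x ∈ 𝒩 i) (x : M) (i : ι) :
    (decompose 𝒩 (φ x) i : N) = φ (decompose ℳ x i) := by
  induction x using Decomposition.inductionOn ℳ with
  | zero => simp
  | @homogeneous j m =>
    obtain rfl | hij := eq_or_ne j i
    · rw [decompose_of_mem_same 𝒩 (hφ j m m.2), decompose_of_mem_same ℳ m.2]
    · rw [decompose_of_mem_ne 𝒩 (hφ j m m.2) hij, decompose_of_mem_ne ℳ m.2 hij, map_zero]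
  | add x y hx hy => simp [hx, hy]

theorem injective_of_surjective_of_graded {ι R M : Type*} [DecidableEq ι] [Ring R]
    [OrzechProperty R] [AddCommGroup M] [Module R M] (ℳ : ι → Submodule R M) [Decomposition ℳ]
    (hfg : ∀ i, (ℳ i).FG) {φ : M →ₗ[R] M} (hφ : ∀ i, ∀ x ∈ ℳ i, φ x ∈ ℳ i)
    (hsurj : Function.Surjective φ) : Function.Injective φ := by
  have hinj (i : ι) : Function.Injective (φ.restrict (hφ i)) := by
    have := Module.Finite.iff_fg.2 (hfg i)
    refine OrzechProperty.injective_of_surjective_endomorphism _ fun y => ?_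
    obtain ⟨x, hx⟩ := hsurj y
    refine ⟨decompose ℳ x i, Subtype.ext ?_⟩
    rw [LinearMap.coe_restrict_apply, ← coe_decompose_map ℳ ℳ hφ, hx,
      decompose_of_mem_same ℳ y.2]
  rw [injective_iff_map_eq_zero]
  intro x hx
  refine (decompose ℳ).injective (DFinsupp.ext fun i => hinj i (Subtype.ext ?_))
  rw [LinearMap.coe_restrict_apply, ← coe_decompose_map ℳ ℳ hφ, hx]
  simp

theorem eq_top_of_sup_span_eq_top_of_graded {R A κ : Type*} [CommSemiring R] [CommSemiring A]
    [Algebra R A] (𝒜 : ℕ → Submodule R A) [GradedAlgebra 𝒜] {d : κ → ℕ} (hd : ∀ s, d s ≠ 0)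
    {z : κ → A} (hz : ∀ s, z s ∈ 𝒜 (d s)) {W : Submodule R A} (hW : W.IsHomogeneous 𝒜)
    (hzW : ∀ s, ∀ x ∈ W, z s * x ∈ W)
    (hsup : W ⊔ (Ideal.span (Set.range z)).restrictScalars R = ⊤) : W = ⊤ := by
  have hcomp (m : ℕ) : 𝒜 m ≤ W := by
    induction m using Nat.strong_induction_on with
    | _ m ih =>
    intro f hf
    obtain ⟨w, hw, g, hg, rfl⟩ := Submodule.mem_sup.1 (hsup ▸ Submodule.mem_top : f ∈ _)
    obtain ⟨a, rfl⟩ := Finsupp.mem_span_range_iff_exists_finsupp.1 hg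
    rw [← decompose_of_mem_same 𝒜 hf, decompose_add, DirectSum.add_apply, Submodule.coe_add,
      Finsupp.sum, decompose_sum, DirectSum.sum_apply, Submodule.coe_sum]
    refine W.add_mem (hW m hw) (W.sum_mem fun s _ => ?_)
    rw [smul_eq_mul, mul_comm, coe_decompose_mul_of_left_mem 𝒜 m (hz s)]
    split_ifs with hsm
    · have := hd s
      exact hzW s _ (ih (m - d s) (by omega) (SetLike.coe_mem _))
    · exact W.zero_mem
  classical
  refine eq_top_iff.2 fun f _ => ?_
  rw [← sum_support_decompose 𝒜 f]
  exact W.sum_mem fun m _ => hcomp m (SetLike.coe_mem _)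

end Graded

section AlgCombination
variable {R P S ι : Type*} [CommSemiring R] [CommRing P] [CommRing S] [Algebra R P] [Algebra R S]

/-- The `R`-linear map `(ι →₀ P) → S`, `w ↦ ∑ i, f (w i) * v i`, whose bijectivity says that the
`v i` form a basis of `S` over `P` along `f`. It is not stated as a `P`-linear map so that `f` need
not be installed as an algebra structure. -/
noncomputable def algCombination (f : P →ₐ[R] S) (v : ι → S) : (ι →₀ P) →ₗ[R] S :=
  Finsupp.lsum R fun i => LinearMap.mulRight R (v i) ∘ₗ f.toLinearMap

variable (f : P →ₐ[R] S) (v : ι → S)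

@[simp]
theorem algCombination_single (i : ι) (p : P) :
    algCombination f v (Finsupp.single i p) = f p * v i := by
  simp [algCombination]

theorem algCombination_smul (p : P) (w : ι →₀ P) :
    algCombination f v (p • w) = f p * algCombination f v w := by
  induction w using Finsupp.induction_linear with
  | zero => simp
  | add w w' hw hw' => rw [smul_add, map_add, map_add, hw, hw', mul_add]
  | single i q =>
    rw [Finsupp.smul_single, algCombination_single, algCombination_single, smul_eq_mul, map_mul,
      mul_assoc]

theorem flat_of_bijective_algCombination (h : Function.Bijective (algCombination f v)) :
    f.toRingHom.Flat := by
  algebraize [f.toRingHom]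
  let e : (ι →₀ P) →ₗ[P] S := { algCombination f v with map_smul' := algCombination_smul f v }
  exact Module.Flat.of_linearEquiv (LinearEquiv.ofBijective e h).symm

end AlgCombination

section BoxMonomial
open MvPolynomial

/-- Coordinatewise division of exponents `u s = d s * q s + b s` with remainder, as a bijection
`u ↦ (b, q)`. -/
noncomputable def divModEquiv {σ : Type*} [Finite σ] (d : σ → ℕ) [∀ s, NeZero (d s)] :
    (σ →₀ ℕ) ≃ (∀ s, Fin (d s)) × (σ →₀ ℕ) :=
  Finsupp.equivFunOnFinite.trans <|
    (Equiv.piCongrRight fun s => (Nat.divModEquiv (d s)).trans (Equiv.prodComm ..)).trans <|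
    (Equiv.arrowProdEquivProdArrow ..).trans <|
    (Equiv.refl _).prodCongr Finsupp.equivFunOnFinite.symm

theorem divModEquiv_add {σ : Type*} [Finite σ] (d : σ → ℕ) [∀ s, NeZero (d s)] (u : σ →₀ ℕ)
    (s : σ) : d s * (divModEquiv d u).2 s + (divModEquiv d u).1 s = u s :=
  Nat.div_add_mod (u s) (d s)

/-- The monomial `∏ s, t s ^ b s` whose exponents lie in the box `b s < d s`. -/
def boxMonomial {σ A : Type*} [Fintype σ] [CommMonoid A] (d : σ → ℕ) (t : σ → A)
    (b : ∀ s, Fin (d s)) : A :=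
  ∏ s, t s ^ (b s : ℕ)

variable {σ R : Type*} [CommRing R]

theorem map_mem_homogeneousSubmodule {τ : Type*} {φ : MvPolynomial σ R →ₗ[R] MvPolynomial τ R}
    (hφ : ∀ u, (φ (monomial u 1)).IsHomogeneous u.degree) (m : ℕ) :
    ∀ f ∈ homogeneousSubmodule σ R m, φ f ∈ homogeneousSubmodule τ R m := by
  intro f hf
  rw [f.as_sum, map_sum]
  refine Submodule.sum_mem _ fun u hu => ?_
  rw [← mul_one (coeff u f), ← smul_eq_mul, ← smul_monomial, map_smul]
  have hum : u.degree = m := by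
    rw [Finsupp.degree_eq_weight_one]
    exact hf (mem_support_iff.1 hu)
  exact hum ▸ Submodule.smul_mem _ _ (hφ u)

variable [Fintype σ]

theorem isHomogeneous_boxMonomial_X (d : σ → ℕ) (b : ∀ s, Fin (d s)) :
    (boxMonomial d (X : σ → MvPolynomial σ R) b).IsHomogeneous (∑ s, (b s : ℕ)) :=
  .prod _ _ _ fun s _ => isHomogeneous_X_pow s _

variable (R) in
/-- The basis of the free module on the box whose vector at `u` is the monomial `X ^ q` at the
index `b`, where `u = d * q + b` with `b` in the box. It is indexed by the monomials `u` of
`MvPolynomial σ R` in order to compare the two modules degree by degree. -/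
noncomputable def boxBasis (d : σ → ℕ) [∀ s, NeZero (d s)] :
    Module.Basis (σ →₀ ℕ) R ((∀ s, Fin (d s)) →₀ MvPolynomial σ R) :=
  (Finsupp.basis fun _ => basisMonomials σ R).reindex
    ((Equiv.sigmaEquivProd ..).trans (divModEquiv d).symm)

theorem boxBasis_apply (d : σ → ℕ) [∀ s, NeZero (d s)] (u : σ →₀ ℕ) :
    boxBasis R d u =
      Finsupp.single (divModEquiv d u).1 (monomial (divModEquiv d u).2 1) := by
  simp [boxBasis]

variable {d : σ → ℕ} [∀ s, NeZero (d s)] {z : σ → MvPolynomial σ R}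

theorem isHomogeneous_algCombination_boxBasis (hz : ∀ s, (z s).IsHomogeneous (d s)) (u : σ →₀ ℕ) :
    (algCombination (aeval (R := R) z) (boxMonomial d X) (boxBasis R d u)).IsHomogeneous
      u.degree := by
  have hu : u.degree = ∑ s, d s * (divModEquiv d u).2 s + ∑ s, ((divModEquiv d u).1 s : ℕ) := by
    simp_rw [Finsupp.degree_eq_sum, ← Finset.sum_add_distrib, divModEquiv_add]
  rw [boxBasis_apply, algCombination_single, aeval_monomial, map_one, one_mul,
    Finsupp.prod_fintype _ _ (by simp), hu]
  exact .mul (.prod _ _ _ fun s _ => (hz s).pow _) (isHomogeneous_boxMonomial_X d _)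

attribute [local instance] MvPolynomial.gradedAlgebra

theorem bijective_algCombination_boxMonomial (hz : ∀ s, (z s).IsHomogeneous (d s))
    (hspan : Submodule.span R (Set.range (boxMonomial d X)) ⊔
      (Ideal.span (Set.range z)).restrictScalars R = ⊤) :
    Function.Bijective
      (algCombination (aeval (R := R) z) (boxMonomial d (X : σ → MvPolynomial σ R))) := by
  set Φ := algCombination (aeval (R := R) z) (boxMonomial d (X : σ → MvPolynomial σ R))
  let e := (basisMonomials σ R).equiv (boxBasis R d) (Equiv.refl _)
  have hgraded := map_mem_homogeneousSubmodule (φ := Φ ∘ₗ e.toLinearMap) fun u => by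
    have he : e (monomial u 1) = boxBasis R d u := by
      simpa using (basisMonomials σ R).equiv_apply u (boxBasis R d) (Equiv.refl _)
    rw [LinearMap.comp_apply, LinearEquiv.coe_coe, he]
    exact isHomogeneous_algCombination_boxBasis hz u
  have hrange : LinearMap.range (Φ ∘ₗ e.toLinearMap) = LinearMap.range Φ :=
    LinearMap.range_comp_of_range_eq_top _ e.range
  have hsurj : LinearMap.range Φ = ⊤ := by
    refine eq_top_of_sup_span_eq_top_of_graded (homogeneousSubmodule σ R) (fun s => NeZero.ne (d s))
      hz ?_ ?_ (top_unique (hspan.ge.trans (sup_le_sup_right (Submodule.span_le.2 ?_) _)))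
    · rw [← hrange]
      rintro m _ ⟨f, rfl⟩
      rw [coe_decompose_map _ _ hgraded]
      exact LinearMap.mem_range_self _ _
    · rintro s _ ⟨w, rfl⟩
      exact ⟨(X s : MvPolynomial σ R) • w, by simp [Φ, algCombination_smul]⟩
    · rintro _ ⟨b, rfl⟩
      exact ⟨Finsupp.single b 1, by simp [Φ]⟩
  have hinj : Function.Injective (Φ ∘ₗ e.toLinearMap) :=
    injective_of_surjective_of_graded _ (homogeneousSubmodule_fg σ R) hgraded
      (LinearMap.range_eq_top.1 (hrange.trans hsurj))
  exact ⟨(EquivLike.injective_comp e Φ).1 hinj, LinearMap.range_eq_top.1 hsurj⟩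

end BoxMonomial

open MvPolynomial in
theorem flat_rename {R σ τ : Type*} [CommRing R] {f : τ → σ} (hf : Function.Injective f) :
    (rename f : MvPolynomial τ R →ₐ[R] MvPolynomial σ R).toRingHom.Flat := by
  classical
  let e : ↥(Set.range f)ᶜ ⊕ τ ≃ σ :=
    (Equiv.sumComm ..).trans
      (((Equiv.ofInjective f hf).sumCongr (.refl _)).trans (Equiv.Set.sumCompl (Set.range f)))
  have hinr : (rename Sum.inr : MvPolynomial τ R →ₐ[R]
      MvPolynomial (↥(Set.range f)ᶜ ⊕ τ) R).toRingHom.Flat := by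
    have h : (rename Sum.inr : MvPolynomial τ R →ₐ[R] MvPolynomial (↥(Set.range f)ᶜ ⊕ τ) R) =
        (sumAlgEquiv R _ τ).symm.toAlgHom.comp (IsScalarTower.toAlgHom R (MvPolynomial τ R)
          (MvPolynomial ↥(Set.range f)ᶜ (MvPolynomial τ R))) := by
      ext i
      simp [← sumAlgEquiv_comp_rename_inr]
    rw [h]
    exact (RingHom.flat_algebraMap_iff.2 inferInstance).comp
      (.of_bijective (sumAlgEquiv R _ τ).symm.bijective)
  have hfe : (rename f : MvPolynomial τ R →ₐ[R] MvPolynomial σ R) =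
      (renameEquiv R e).toAlgHom.comp (rename Sum.inr) := by
    ext i
    simp [e]
  rw [hfe]
  exact hinr.comp (.of_bijective (renameEquiv R e).bijective)

section SplitPolynomial
open Polynomial
open scoped Pointwise

theorem map_divByMonic_X_sub_C {A Q : Type*} [CommRing A] [CommRing Q] (φ : A →+* Q) {f : A[X]}
    {a : A} {q : Q[X]} (hf : f.map φ = (X - C (φ a)) * q) : (f /ₘ (X - C a)).map φ = q := by
  rw [map_divByMonic φ (monic_X_sub_C a), hf, Polynomial.map_sub, map_X, map_C,
    mul_divByMonic_cancel_left q (monic_X_sub_C _)]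

theorem range_pow_smul_range_boxMonomial_tail_subset {A Q : Type*} [CommSemiring A] [CommSemiring Q]
    [Algebra A Q] {n : ℕ} {t : Fin (n + 1) → Q} {a : A} (ha : algebraMap A Q a = t 0) :
    (Set.range fun l : Fin (n + 1) => a ^ (l : ℕ)) •
        Set.range (boxMonomial (fun j : Fin n => n - (j : ℕ)) (Fin.tail t)) ⊆
      Set.range (boxMonomial (fun j : Fin (n + 1) => n + 1 - (j : ℕ)) t) := by
  rintro _ ⟨_, ⟨l, rfl⟩, _, ⟨b, rfl⟩, rfl⟩
  refine ⟨Fin.cons l fun j => (b j).cast (by simp), ?_⟩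
  rw [boxMonomial, Fin.prod_univ_succ, ← ha, ← map_pow, ← Algebra.smul_def]
  rfl

theorem adjoin_range_tail_eq_top {k A Q : Type*} [CommSemiring k] [CommSemiring A] [CommSemiring Q]
    [Algebra k A] [Algebra k Q] [Algebra A Q] [IsScalarTower k A Q] {n : ℕ} {t : Fin (n + 1) → Q}
    {a : A} (ha : algebraMap A Q a = t 0) (ht : Algebra.adjoin k (Set.range t) = ⊤) :
    Algebra.adjoin A (Set.range (Fin.tail t)) = ⊤ := by
  have hle : Algebra.adjoin k (Set.range t) ≤
      (Algebra.adjoin A (Set.range (Fin.tail t))).restrictScalars k := by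
    rw [Algebra.adjoin_le_iff, Set.range_subset_iff]
    intro j
    rw [SetLike.mem_coe, Subalgebra.mem_restrictScalars]
    cases j using Fin.cases with
    | zero => exact ha ▸ Subalgebra.algebraMap_mem _ a
    | succ j => exact Algebra.subset_adjoin (Set.mem_range_self (f := Fin.tail t) j)
  exact top_unique fun x _ => hle (ht ▸ Algebra.mem_top)

theorem span_range_root_pow {k : Type*} [CommRing k] {f : k[X]} (hf : f.Monic) {n : ℕ}
    (hn : f.natDegree = n) :
    Submodule.span k (Set.range fun l : Fin n => AdjoinRoot.root f ^ (l : ℕ)) = ⊤ := by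
  subst hn
  rw [← (AdjoinRoot.powerBasis' hf).basis.span_eq, (AdjoinRoot.powerBasis' hf).coe_basis]
  rfl

theorem span_boxMonomial_eq_top_of_map_eq_prod {k Q : Type*} [CommRing k] [CommRing Q]
    [Algebra k Q] {n : ℕ} {t : Fin n → Q} (ht : Algebra.adjoin k (Set.range t) = ⊤) {f : k[X]}
    (hf : f.Monic) (hft : f.map (algebraMap k Q) = ∏ j, (X - C (t j))) :
    Submodule.span k (Set.range (boxMonomial (fun j : Fin n => n - (j : ℕ)) t)) = ⊤ := by
  nontriviality Q
  induction n generalizing k with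
  | zero =>
    have hrange : Set.range (boxMonomial (fun j : Fin 0 => 0 - (j : ℕ)) t) = {1} := by
      ext
      simp [boxMonomial, eq_comm]
    rw [Set.range_eq_empty t, Algebra.adjoin_empty] at ht
    rw [hrange, ← Submodule.one_eq_span, ← Algebra.toSubmodule_bot, ht, Algebra.top_toSubmodule]
  | succ n ih =>
    rw [Fin.prod_univ_succ] at hft
    have hroot : aeval (t 0) f = 0 := by
      rw [← eval_map_algebraMap, hft]
      simp
    let φ := AdjoinRoot.liftAlgHom f (Algebra.ofId k Q) (t 0) hroot
    algebraize [φ.toRingHom]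
    have : IsScalarTower k (AdjoinRoot f) Q := .of_algHom φ
    have ha : algebraMap (AdjoinRoot f) Q (AdjoinRoot.root f) = t 0 :=
      AdjoinRoot.liftAlgHom_root _ _ _ _
    set g := f.map (algebraMap k (AdjoinRoot f)) /ₘ (X - C (AdjoinRoot.root f))
    have hfg : (X - C (AdjoinRoot.root f)) * g = f.map (algebraMap k (AdjoinRoot f)) :=
      mul_divByMonic_eq_iff_isRoot.2 (AdjoinRoot.isRoot_root f)
    have hg : g.Monic := .of_mul_monic_left (monic_X_sub_C _) (hfg ▸ hf.map _)
    have hgt : g.map (algebraMap (AdjoinRoot f) Q) = ∏ j, (X - C (Fin.tail t j)) := by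
      refine map_divByMonic_X_sub_C _ ?_
      rw [Polynomial.map_map, ← IsScalarTower.algebraMap_eq, hft, ha]
      rfl
    have hdeg : f.natDegree = n + 1 := by
      rw [← hf.natDegree_map (algebraMap k Q), hft, ← Fin.prod_univ_succ (fun j => X - C (t j))]
      simp [natDegree_prod_of_monic, monic_X_sub_C]
    have hspan := ih (adjoin_range_tail_eq_top ha ht) hg hgt
    refine top_unique (le_trans ?_ (Submodule.span_mono
      (range_pow_smul_range_boxMonomial_tail_subset ha)))
    rw [Submodule.span_smul_of_span_eq_top (span_range_root_pow hf hdeg), hspan,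
      Submodule.restrictScalars_top]

end SplitPolynomial

theorem charpoly_eq_X_pow_of_coeff_eq_zero {ι Q : Type*} [Fintype ι] [DecidableEq ι] [CommRing Q]
    {M : Matrix ι ι Q} (hM : ∀ i < Fintype.card ι, M.charpoly.coeff i = 0) :
    M.charpoly = .X ^ Fintype.card ι := by
  nontriviality Q
  rw [M.charpoly_monic.as_sum, M.charpoly_natDegree_eq_dim, Finset.sum_eq_zero, add_zero]
  intro i hi
  rw [hM i (Finset.mem_range.1 hi), map_zero, zero_mul]

section Chevalley
open MvPolynomial
variable (R : Type*) [CommRing R] (n : ℕ)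

/-- The degree of `chevalleyParameter R n s`. -/
def chevalleyDegree (s : Fin n × Fin n) : ℕ :=
  if s.1 = s.2 then n - s.1 else 1

instance (s : Fin n × Fin n) : NeZero (chevalleyDegree n s) :=
  ⟨by unfold chevalleyDegree; split_ifs <;> omega⟩

/-- The coefficients of the generic characteristic polynomial completed by the off-diagonal matrix
entries to a system of `n ^ 2` forms: the coefficient of `X ^ i` is placed at the diagonal position
`(i, i)`. -/
noncomputable def chevalleyParameter (s : Fin n × Fin n) : MvPolynomial (Fin n × Fin n) R :=
  if s.1 = s.2 then (Matrix.charpoly.univ R (Fin n)).coeff s.1 else X s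

theorem chevalleyParameter_isHomogeneous (s : Fin n × Fin n) :
    (chevalleyParameter R n s).IsHomogeneous (chevalleyDegree n s) := by
  unfold chevalleyParameter chevalleyDegree
  split_ifs
  · exact Matrix.charpoly.univ_coeff_isHomogeneous R (Fin n) _ _ (by simp)
  · exact isHomogeneous_X R s

theorem aeval_chevalleyParameter_comp_rename :
    (aeval (chevalleyParameter R n)).comp (rename fun i : Fin n => (i, i)) =
      aeval (R := R) fun i : Fin n => (Matrix.charpoly.univ R (Fin n)).coeff i := by
  ext i : 1
  simp [chevalleyParameter]

variable {R n} {Q : Type*} [CommRing Q] [Algebra R Q] {φ : MvPolynomial (Fin n × Fin n) R →ₐ[R] Q}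

theorem map_X_eq_zero_of_ne (hφ : ∀ s, φ (chevalleyParameter R n s) = 0) {i j : Fin n}
    (hij : i ≠ j) :
    φ (X (i, j)) = 0 := by
  simpa [chevalleyParameter, hij] using hφ (i, j)

theorem prod_X_sub_C_diag_eq_X_pow (hφ : ∀ s, φ (chevalleyParameter R n s) = 0) :
    ∏ j, (.X - .C (φ (X (j, j)))) = (.X ^ n : Polynomial Q) := by
  have hdiag : (Matrix.mvPolynomialX (Fin n) (Fin n) R).map φ =
      Matrix.diagonal fun j => φ (X (j, j)) := by
    ext i j : 1
    obtain rfl | hij := eq_or_ne i j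
    · simp
    · simp [hij, map_X_eq_zero_of_ne hφ hij]
  have hcoeff (i : ℕ) (hi : i < Fintype.card (Fin n)) :
      ((Matrix.mvPolynomialX (Fin n) (Fin n) R).map φ).charpoly.coeff i = 0 := by
    rw [Fintype.card_fin] at hi
    have hmap := Matrix.charpoly_map (Matrix.mvPolynomialX (Fin n) (Fin n) R) (φ : _ →+* Q)
    refine (congrArg (Polynomial.coeff · i) hmap).trans ?_
    simpa [chevalleyParameter] using hφ (⟨i, hi⟩, ⟨i, hi⟩)
  rw [← Matrix.charpoly_diagonal, ← hdiag, charpoly_eq_X_pow_of_coeff_eq_zero hcoeff,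
    Fintype.card_fin]

theorem adjoin_range_diag_eq_top (hφ : ∀ s, φ (chevalleyParameter R n s) = 0)
    (hsurj : Function.Surjective φ) :
    Algebra.adjoin R (Set.range fun j => φ (X (j, j))) = ⊤ := by
  rw [← (AlgHom.range_eq_top φ).2 hsurj, ← Algebra.map_top, ← adjoin_range_X,
    ← Algebra.adjoin_image, ← Set.range_comp]
  refine le_antisymm (Algebra.adjoin_mono ?_) (Algebra.adjoin_le ?_)
  · rintro _ ⟨j, rfl⟩
    exact ⟨(j, j), rfl⟩
  · rintro _ ⟨⟨i, j⟩, rfl⟩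
    obtain rfl | hij := eq_or_ne i j
    · exact Algebra.subset_adjoin ⟨i, rfl⟩
    · rw [Function.comp_apply, map_X_eq_zero_of_ne hφ hij]
      exact Subalgebra.zero_mem _

theorem range_boxMonomial_diag_subset {A : Type*} [CommMonoid A] (t : Fin n × Fin n → A) :
    Set.range (boxMonomial (fun j : Fin n => n - (j : ℕ)) fun j => t (j, j)) ⊆
      Set.range (boxMonomial (chevalleyDegree n) t) := by
  rintro _ ⟨b, rfl⟩
  refine ⟨fun s => if h : s.1 = s.2 then (b s.1).cast (by simp [chevalleyDegree, h]) else 0, ?_⟩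
  refine (Fintype.prod_prod_type _).trans (Finset.prod_congr rfl fun i _ => ?_)
  rw [Finset.prod_eq_single i (fun j _ hj => by simp [hj.symm]) (by simp)]
  simp

theorem span_boxMonomial_sup_span_chevalleyParameter_eq_top :
    Submodule.span R (Set.range (boxMonomial (chevalleyDegree n) X)) ⊔
      (Ideal.span (Set.range (chevalleyParameter R n))).restrictScalars R = ⊤ := by
  set I := Ideal.span (Set.range (chevalleyParameter R n))
  let π := Ideal.Quotient.mkₐ R I
  have hπ (s) : π (chevalleyParameter R n s) = 0 :=
    Ideal.Quotient.eq_zero_iff_mem.2 (Ideal.subset_span ⟨s, rfl⟩)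
  have hker : I.restrictScalars R = LinearMap.ker π.toLinearMap := by
    ext x
    exact Ideal.Quotient.eq_zero_iff_mem.symm
  have hspan := span_boxMonomial_eq_top_of_map_eq_prod (f := Polynomial.X ^ n)
    (adjoin_range_diag_eq_top hπ (Ideal.Quotient.mkₐ_surjective R I))
    (Polynomial.monic_X_pow n) (by simp [prod_X_sub_C_diag_eq_X_pow hπ])
  have himage :
      π ∘ boxMonomial (chevalleyDegree n) X = boxMonomial (chevalleyDegree n) (π ∘ X) := by
    ext b
    simp [boxMonomial]
  rw [hker, ← Submodule.comap_map_eq, Submodule.map_span, ← Submodule.comap_top π.toLinearMap]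
  congr 1
  refine top_unique (hspan.ge.trans (Submodule.span_mono ?_))
  rw [AlgHom.coe_toLinearMap, ← Set.range_comp, himage]
  exact range_boxMonomial_diag_subset (π ∘ X)

end Chevalley

theorem chevalley_map_flat_general (k : Type*) [CommRing k] (n : ℕ) :
    RingHom.Flat
      ((MvPolynomial.aeval (R := k)
        (fun i : Fin n =>
          (Matrix.charpoly
            (Matrix.of fun i j : Fin n =>
              (MvPolynomial.X (i, j) : MvPolynomial (Fin n × Fin n) k))).coeff i)
        : MvPolynomial (Fin n) k →ₐ[k] MvPolynomial (Fin n × Fin n) k).toRingHom) := by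
  have hflat := flat_of_bijective_algCombination _ _ <|
    bijective_algCombination_boxMonomial (chevalleyParameter_isHomogeneous k n)
      span_boxMonomial_sup_span_chevalleyParameter_eq_top
  have hdiag : Function.Injective fun i : Fin n => (i, i) := fun i j h => congrArg Prod.fst h
  have hcomp : ((MvPolynomial.aeval (R := k) (chevalleyParameter k n)).comp
      (MvPolynomial.rename fun i : Fin n => (i, i))).toRingHom.Flat := by
    rw [AlgHom.toRingHom_eq_coe, AlgHom.comp_toRingHom]
    exact (flat_rename hdiag).comp hflat
  rwa [aeval_chevalleyParameter_comp_rename] at hcomp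

/-- The Chevalley map `p : gl_n → 𝔸^n`, sending an `n×n` matrix to the
coefficients of its characteristic polynomial, is flat; i.e. the corresponding ring map
`k[𝔸^n] → k[gl_n]`, sending the `i`-th coordinate to the `i`-th coefficient of the
characteristic polynomial of the generic matrix, is flat. -/
theorem chevalley_map_flat (k : Type*) [Field k] (n : ℕ) (hn : 0 < n) :
    RingHom.Flat
      ((MvPolynomial.aeval (R := k)
        (fun i : Fin n =>
          (Matrix.charpoly
            (Matrix.of fun i j : Fin n =>
              (MvPolynomial.X (i, j) : MvPolynomial (Fin n × Fin n) k))).coeff i)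
        : MvPolynomial (Fin n) k →ₐ[k] MvPolynomial (Fin n × Fin n) k).toRingHom) :=
  chevalley_map_flat_general k n
end

section
/- Let k be a field, n a positive integer, t the space of diagonal n×n matrices, and q: t → A^n the map sending a diagonal matrix to the coefficients of its characteristic polynomial (equivalently, the elementary symmetric polynomials of its entries). Then q is flat. -/
/-!
A degree `n + 1` monic polynomial with `n + 1` ordered roots is the same as one with a chosen root
`x₀`, together with an ordering of the roots of its cofactor `g` of degree `n`. Hence the map from
roots to coefficients factors as `(x₀, …, xₙ) ↦ (x₀, g) ↦ (X - x₀) g`, where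
`g = ∏_{i ≥ 1} (X - xᵢ)`. The first arrow is the same map in degree `n` over the base `R[x₀]`, flat
by induction. The coordinate ring of the middle space is obtained from the ring of coefficients by
adjoining a root of the generic monic polynomial of degree `n + 1`, so it is free; for flatness it
is enough that it is a retract of the algebra with that root adjoined.
-/

section Retract

variable {A B T : Type*} [CommRing A] [CommRing B] [CommRing T]

lemma flat_of_retract {i : A →+* B} {j : A →+* T} (hi : i.Flat) (f : B →+* T) (g : T →+* B)
    (hf : f.comp i = j) (hg : g.comp j = i) (hfg : f.comp g = RingHom.id T) : j.Flat := by
  algebraize [i, j]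
  let f' : B →ₐ[A] T := { f with commutes' := RingHom.congr_fun hf }
  let g' : T →ₐ[A] B := { g with commutes' := RingHom.congr_fun hg }
  exact Module.Flat.of_retract g'.toLinearMap f'.toLinearMap
    (LinearMap.ext <| RingHom.congr_fun hfg)

end Retract

noncomputable section

open Polynomial

section FreeMonic

variable {R S : Type*} [CommRing R] [CommRing S] {n : ℕ}

lemma map_freeMonic_eval₂Hom (f : R →+* S) {p : S[X]} (hp : IsMonicOfDegree p n) :
    (freeMonic R n).map (MvPolynomial.eval₂Hom f fun i : Fin n => p.coeff i) = p := by
  algebraize [f]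
  exact congrArg Subtype.val <|
    (MvPolynomial.mapEquivMonic R S n).apply_symm_apply (.mk p hp.monic hp.natDegree_eq)

lemma ringHom_ext_freeMonic {f g : MvPolynomial (Fin n) R →+* S}
    (hC : f.comp MvPolynomial.C = g.comp MvPolynomial.C)
    (hmap : (freeMonic R n).map f = (freeMonic R n).map g) : f = g := by
  refine MvPolynomial.ringHom_ext' hC fun i => ?_
  simpa [coeff_freeMonic] using congrArg (coeff · i) hmap

lemma isMonicOfDegree_freeMonic (R : Type*) [CommRing R] [Nontrivial R] (n : ℕ) :
    IsMonicOfDegree (freeMonic R n) n :=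
  ⟨natDegree_freeMonic R n, monic_freeMonic R n⟩

lemma isMonicOfDegree_prod_X_sub_C [Nontrivial R] (x : Fin n → R) :
    IsMonicOfDegree (∏ i, (X - C (x i))) n :=
  ⟨by simp, monic_prod_X_sub_C x _⟩

end FreeMonic

section RootCofactor

variable {R : Type*} [CommRing R]

/-- The cofactor of `X - root p` in `p`, over the ring `AdjoinRoot p`. -/
def rootCofactor (p : R[X]) : (AdjoinRoot p)[X] :=
  p.map (AdjoinRoot.of p) /ₘ (X - C (AdjoinRoot.root p))

lemma X_sub_C_root_mul_rootCofactor (p : R[X]) :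
    (X - C (AdjoinRoot.root p)) * rootCofactor p = p.map (AdjoinRoot.of p) :=
  mul_divByMonic_eq_iff_isRoot.mpr (AdjoinRoot.isRoot_root p)

lemma isMonicOfDegree_rootCofactor {p : R[X]} {n : ℕ} [Nontrivial (AdjoinRoot p)]
    (hp : IsMonicOfDegree p (n + 1)) : IsMonicOfDegree (rootCofactor p) n := by
  refine (isMonicOfDegree_X_sub_one (AdjoinRoot.root p)).of_mul_left ?_
  rw [X_sub_C_root_mul_rootCofactor, add_comm]
  exact ⟨(hp.monic.natDegree_map _).trans hp.natDegree_eq, hp.monic.map _⟩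

end RootCofactor

section LinearFactor

variable (R : Type*) [CommRing R] (n : ℕ)

/-- The generic monic polynomial of degree `n + 1` with a chosen root `x`, namely `(X - x) g` where
`x` is the variable of `R[X]` and `g` is the generic monic polynomial of degree `n`. -/
def freeMonicWithRoot : (MvPolynomial (Fin n) R[X])[X] :=
  (X - C (MvPolynomial.C X)) * freeMonic R[X] n

/-- The map on coordinate rings of the multiplication `(x, g) ↦ (X - x) g`, for `g` monic of
degree `n`; the middle ring `R[x][c₀, …, cₙ₋₁]` is encoded with coefficients in `R[X]`. -/
def linearFactorMap : MvPolynomial (Fin (n + 1)) R →+* MvPolynomial (Fin n) R[X] :=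
  MvPolynomial.eval₂Hom (MvPolynomial.C.comp C) fun i => (freeMonicWithRoot R n).coeff i

variable [Nontrivial R]

lemma map_freeMonic_linearFactorMap :
    (freeMonic R (n + 1)).map (linearFactorMap R n) = freeMonicWithRoot R n := by
  refine map_freeMonic_eval₂Hom _ ?_
  rw [add_comm]
  exact (isMonicOfDegree_X_sub_one _).mul (isMonicOfDegree_freeMonic R[X] n)

/-- The comparison map sending the adjoined root to the variable of `R[X]`. -/
def adjoinRootFreeMonicHom :
    AdjoinRoot (freeMonic R (n + 1)) →+* MvPolynomial (Fin n) R[X] :=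
  AdjoinRoot.lift (linearFactorMap R n) (MvPolynomial.C X) <| by
    rw [← eval_map, map_freeMonic_linearFactorMap]
    simp [freeMonicWithRoot]

/-- The comparison map sending the variable of `R[X]` to the adjoined root and the generic monic
polynomial of degree `n` to the cofactor of that root. -/
def rootCofactorHom : MvPolynomial (Fin n) R[X] →+* AdjoinRoot (freeMonic R (n + 1)) :=
  MvPolynomial.eval₂Hom
    (eval₂RingHom ((AdjoinRoot.of _).comp MvPolynomial.C) (AdjoinRoot.root _))
    fun i => (rootCofactor (freeMonic R (n + 1))).coeff i

lemma adjoinRootFreeMonicHom_comp_of :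
    (adjoinRootFreeMonicHom R n).comp (AdjoinRoot.of _) = linearFactorMap R n :=
  AdjoinRoot.lift_comp_of _

lemma map_rootCofactor_adjoinRootFreeMonicHom :
    (rootCofactor (freeMonic R (n + 1))).map (adjoinRootFreeMonicHom R n) = freeMonic R[X] n := by
  rw [rootCofactor, map_divByMonic _ (monic_X_sub_C _), Polynomial.map_map,
    adjoinRootFreeMonicHom_comp_of, map_freeMonic_linearFactorMap]
  simp [adjoinRootFreeMonicHom, freeMonicWithRoot, mul_divByMonic_cancel_left, monic_X_sub_C]

lemma map_freeMonic_rootCofactorHom :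
    (freeMonic R[X] n).map (rootCofactorHom R n) = rootCofactor (freeMonic R (n + 1)) :=
  have := (adjoinRootFreeMonicHom R n).domain_nontrivial
  map_freeMonic_eval₂Hom _ (isMonicOfDegree_rootCofactor (isMonicOfDegree_freeMonic R (n + 1)))

lemma rootCofactorHom_comp_linearFactorMap :
    (rootCofactorHom R n).comp (linearFactorMap R n) = AdjoinRoot.of _ := by
  refine ringHom_ext_freeMonic ?_ ?_
  · ext a : 1
    simp [rootCofactorHom, linearFactorMap]
  · rw [← Polynomial.map_map, map_freeMonic_linearFactorMap, freeMonicWithRoot,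
      Polynomial.map_mul, map_freeMonic_rootCofactorHom, ← X_sub_C_root_mul_rootCofactor]
    simp [rootCofactorHom]

lemma adjoinRootFreeMonicHom_comp_rootCofactorHom :
    (adjoinRootFreeMonicHom R n).comp (rootCofactorHom R n) = RingHom.id _ := by
  refine ringHom_ext_freeMonic ?_ ?_
  · ext a : 2
    · simp [rootCofactorHom, adjoinRootFreeMonicHom, linearFactorMap]
    · simp [rootCofactorHom, adjoinRootFreeMonicHom]
  · rw [← Polynomial.map_map, map_freeMonic_rootCofactorHom,
      map_rootCofactor_adjoinRootFreeMonicHom, Polynomial.map_id]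

lemma flat_linearFactorMap : (linearFactorMap R n).Flat := by
  have hfree : Module.Free _ (AdjoinRoot (freeMonic R (n + 1))) :=
    (monic_freeMonic R (n + 1)).free_adjoinRoot
  have hflat : (AdjoinRoot.of (freeMonic R (n + 1))).Flat :=
    RingHom.flat_algebraMap_iff.mpr inferInstance
  exact flat_of_retract hflat (adjoinRootFreeMonicHom R n) (rootCofactorHom R n)
    (adjoinRootFreeMonicHom_comp_of R n) (rootCofactorHom_comp_linearFactorMap R n)
    (adjoinRootFreeMonicHom_comp_rootCofactorHom R n)

end LinearFactor

section Vieta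

variable (R : Type*) [CommRing R] (n : ℕ)

/-- The map on coordinate rings of `(x₀, …, xₙ₋₁) ↦ ∏ (X - xᵢ)`, from roots to coefficients. -/
def vietaMap : MvPolynomial (Fin n) R →+* MvPolynomial (Fin n) R :=
  MvPolynomial.eval₂Hom MvPolynomial.C fun i =>
    (∏ j : Fin n, (X - C (MvPolynomial.X j : MvPolynomial (Fin n) R))).coeff i

/-- The isomorphism `R[x₀, …, xₙ] ≃ R[x₀][x₁, …, xₙ]`, in contrast with `MvPolynomial.finSuccEquiv`,
whose target is `R[x₁, …, xₙ][x₀]`. -/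
def finSuccEquivRight : MvPolynomial (Fin (n + 1)) R ≃ₐ[R] MvPolynomial (Fin n) R[X] :=
  (MvPolynomial.renameEquiv R (finSuccEquiv n)).trans (MvPolynomial.optionEquivRight R (Fin n))

@[simp]
lemma finSuccEquivRight_X_zero :
    finSuccEquivRight R n (MvPolynomial.X 0) = MvPolynomial.C X := by
  simp [finSuccEquivRight]

@[simp]
lemma finSuccEquivRight_X_succ (i : Fin n) :
    finSuccEquivRight R n (MvPolynomial.X i.succ) = MvPolynomial.X i := by
  simp [finSuccEquivRight]

lemma vietaMap_zero : vietaMap R 0 = RingHom.id _ :=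
  MvPolynomial.ringHom_ext (by simp [vietaMap]) fun i => i.elim0

variable [Nontrivial R]

lemma map_freeMonic_vietaMap :
    (freeMonic R n).map (vietaMap R n) = ∏ j, (X - C (MvPolynomial.X j)) :=
  map_freeMonic_eval₂Hom _ (isMonicOfDegree_prod_X_sub_C _)

lemma finSuccEquivRight_comp_vietaMap_succ :
    (finSuccEquivRight R n : _ →+* _).comp (vietaMap R (n + 1)) =
      (vietaMap R[X] n).comp (linearFactorMap R n) := by
  refine ringHom_ext_freeMonic ?_ ?_
  · ext a : 1
    simpa [vietaMap, linearFactorMap, MvPolynomial.algebraMap_eq] using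
      (finSuccEquivRight R n).commutes a
  · rw [← Polynomial.map_map, ← Polynomial.map_map, map_freeMonic_vietaMap,
      map_freeMonic_linearFactorMap, freeMonicWithRoot, Polynomial.map_mul,
      map_freeMonic_vietaMap, Fin.prod_univ_succ]
    simp [Polynomial.map_prod, vietaMap]

end Vieta

lemma flat_vietaMap (R : Type*) [CommRing R] [Nontrivial R] (n : ℕ) : (vietaMap R n).Flat := by
  induction n generalizing R with
  | zero => exact vietaMap_zero R ▸ .id _
  | succ n ih =>
    have hfactor : vietaMap R (n + 1) = ((finSuccEquivRight R n).symm : _ →+* _).comp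
        ((vietaMap R[X] n).comp (linearFactorMap R n)) := by
      rw [← finSuccEquivRight_comp_vietaMap_succ]
      ext <;> simp
    rw [hfactor]
    exact ((flat_linearFactorMap R n).comp (ih R[X])).comp
      (.of_bijective (finSuccEquivRight R n).symm.bijective)

end

theorem diagonal_chevalley_map_flat_general (R : Type*) [CommRing R] (n : ℕ) :
    RingHom.Flat
      ((MvPolynomial.aeval (R := R)
        (fun i : Fin n =>
          (Matrix.charpoly
            (Matrix.diagonal fun j : Fin n =>
              (MvPolynomial.X j : MvPolynomial (Fin n) R))).coeff i)
        : MvPolynomial (Fin n) R →ₐ[R] MvPolynomial (Fin n) R).toRingHom) := by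
  rw [Matrix.charpoly_diagonal]
  cases subsingleton_or_nontrivial R
  · exact .of_bijective
      ⟨Function.injective_of_subsingleton _, Function.surjective_to_subsingleton _⟩
  · exact flat_vietaMap R n

/-- The map `q : t → 𝔸^n` from the diagonal matrices to `𝔸^n`, sending a
diagonal matrix to the coefficients of its characteristic polynomial (equivalently, given
by the elementary symmetric polynomials of its entries), is flat; i.e. the ring map
`k[𝔸^n] → k[t]` sending the `i`-th coordinate to the `i`-th coefficient of the
characteristic polynomial of the generic diagonal matrix is flat. -/
theorem diagonal_chevalley_map_flat (k : Type*) [Field k] (n : ℕ) (hn : 0 < n) :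
    RingHom.Flat
      ((MvPolynomial.aeval (R := k)
        (fun i : Fin n =>
          (Matrix.charpoly
            (Matrix.diagonal fun j : Fin n =>
              (MvPolynomial.X j : MvPolynomial (Fin n) k))).coeff i)
        : MvPolynomial (Fin n) k →ₐ[k] MvPolynomial (Fin n) k).toRingHom) :=
  diagonal_chevalley_map_flat_general k n
end
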